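/- arXiv:1606.04532 — 2 statements merged into one kernel-verified Lean document; each statement's English description precedes it below -/
import Mathlib

section
/- Let G(F) be the quotient of GL_k(F) × GL_{k+1}(F) by the central subgroup N = {(c·I_k, c⁻¹·I_{k+1}) : c ∈ F^×}. Then G(F) acts freely and transitively on the set M_k(F) of nondegenerate 2 × k × (k+1) hypermatrices over F; in particular, for any fixed x ∈ M_k(F), the map g ↦ g·x is a bijection G(F) → M_k(F). -/
open Matrix

/-- The set of nondegenerate `2 × k × (k+1)` hypermatrices over `F`. -/
def Mk (F : Type*) [Field F] (k : ℕ) :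
    Set (Matrix (Fin (k+1)) (Fin k) F × Matrix (Fin (k+1)) (Fin k) F) :=
  {S | ∀ c₀ c₁ : AlgebraicClosure F, ¬ (c₀ = 0 ∧ c₁ = 0) →
    (c₀ • S.1.map (algebraMap F (AlgebraicClosure F)) +
     c₁ • S.2.map (algebraMap F (AlgebraicClosure F))).rank = k}

/-- The action of `GL_k(F) × GL_{k+1}(F)` on hypermatrices: `(A,B)·(S₀,S₁) = (B S₀ Aᵀ, B S₁ Aᵀ)`. -/
def hmAct {F : Type*} [Field F] {k : ℕ} (g : GL (Fin k) F × GL (Fin (k+1)) F)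
    (S : Matrix (Fin (k+1)) (Fin k) F × Matrix (Fin (k+1)) (Fin k) F) :
    Matrix (Fin (k+1)) (Fin k) F × Matrix (Fin (k+1)) (Fin k) F :=
  ((g.2 : Matrix (Fin (k+1)) (Fin (k+1)) F) * S.1 * (g.1 : Matrix (Fin k) (Fin k) F)ᵀ,
   (g.2 : Matrix (Fin (k+1)) (Fin (k+1)) F) * S.2 * (g.1 : Matrix (Fin k) (Fin k) F)ᵀ)

/-- The central subgroup `N = {(c·I_k, c⁻¹·I_{k+1})}`, as a subset of the product group. -/
def Nset (F : Type*) [Field F] (k : ℕ) : Set (GL (Fin k) F × GL (Fin (k+1)) F) :=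
  {g | ∃ c : Fˣ,
    (g.1 : Matrix (Fin k) (Fin k) F) = (c : F) • (1 : Matrix (Fin k) (Fin k) F) ∧
    (g.2 : Matrix (Fin (k+1)) (Fin (k+1)) F) =
      ((c⁻¹ : Fˣ) : F) • (1 : Matrix (Fin (k+1)) (Fin (k+1)) F)}

/-- A matrix whose rows form a chain for the pencil. -/
def IsCh {K : Type*} [Field K] {k : ℕ} (S0 S1 : Matrix (Fin (k+1)) (Fin k) K)
    (Y : Matrix (Fin (k+1)) (Fin (k+1)) K) : Prop :=
  (∀ j, (Y * S0) 0 j = 0) ∧ (∀ j, (Y * S1) (Fin.last k) j = 0) ∧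
    ∀ (i : Fin k) j, (Y * S1) i.castSucc j + (Y * S0) i.succ j = 0

lemma surj_of_rank {K : Type*} [Field K] {k : ℕ} (S : Matrix (Fin (k+1)) (Fin k) K)
    (h : S.rank = k) : Function.Surjective (Matrix.vecMulLinear S) := by
  rw [← LinearMap.range_eq_top]
  apply Submodule.eq_top_of_finrank_eq
  rw [← Matrix.mulVecLin_transpose, ← Matrix.rank, Matrix.rank_transpose, h]
  simp

lemma chain_aux {K : Type*} [Field K] [IsAlgClosed K] {k : ℕ}
    (f0 f1 : (Fin (k+1) → K) →ₗ[K] (Fin k → K))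
    (h0 : Function.Surjective f0) (h1 : ∀ μ : K, Function.Surjective (f1 - μ • f0))
    (y : Fin (k+1) → (Fin (k+1) → K)) (hy0 : f0 (y 0) = 0) (hyl : f1 (y (Fin.last k)) = 0)
    (hy : ∀ i : Fin k, f1 (y i.castSucc) + f0 (y i.succ) = 0) (hne : y ≠ 0) :
    Submodule.span K (Set.range y) = ⊤ := by
  set U := Submodule.span K (Set.range y) with hU
  have hyU : ∀ i, y i ∈ U := fun i => Submodule.subset_span ⟨i, rfl⟩
  have hker1 : Module.finrank K (LinearMap.ker f0) = 1 := by
    have := LinearMap.finrank_range_add_finrank_ker f0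
    rw [LinearMap.range_eq_top.2 h0, finrank_top] at this
    simp at this
    omega
  have hex : ∃ n ∈ U, f0 n = 0 ∧ n ≠ 0 := by
    by_contra hc
    push Not at hc
    apply hne
    funext i
    induction i using Fin.induction with
    | zero => exact hc _ (hyU _) hy0
    | succ i ih =>
      apply hc _ (hyU _)
      have := hy i
      rw [ih] at this
      simpa using this
  obtain ⟨n, hnU, hn0, hn⟩ := hex
  have hkerU : LinearMap.ker f0 ≤ U := by
    intro w hw
    have hn' : (⟨n, hn0⟩ : LinearMap.ker f0) ≠ 0 := by
      simpa [Subtype.ext_iff] using hn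
    obtain ⟨c, hc⟩ := (finrank_eq_one_iff_of_nonzero' _ hn').1 hker1 ⟨w, hw⟩
    have : c • n = w := congrArg Subtype.val hc
    rw [← this]
    exact U.smul_mem _ hnU
  set T := U.map f0 with hT
  have hT0 : U ≤ T.comap f0 := Submodule.le_comap_map _ _
  have hT1 : U ≤ T.comap f1 := by
    rw [hU, Submodule.span_le]
    rintro _ ⟨i, rfl⟩
    change f1 (y i) ∈ T
    induction i using Fin.lastCases with
    | last => rw [hyl]; exact T.zero_mem
    | cast i =>
      rw [eq_neg_of_add_eq_zero_left (hy i)]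
      exact T.neg_mem (Submodule.mem_map_of_mem (hyU _))
  let g0 := U.mapQ T f0 hT0
  let g1 := U.mapQ T f1 hT1
  have hg0i : Function.Injective g0 := by
    rw [injective_iff_map_eq_zero]
    intro w
    induction w using Submodule.Quotient.induction_on with
    | H w =>
    intro hw
    have hw' : f0 w ∈ T := by
      simpa [g0, Submodule.mapQ_apply, Submodule.Quotient.mk_eq_zero] using hw
    obtain ⟨u, hu, huw⟩ := hw'
    rw [Submodule.Quotient.mk_eq_zero]
    have : w - u ∈ U := hkerU (by simp [huw])
    simpa using U.add_mem this hu
  have hg0s : Function.Surjective g0 := by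
    intro v
    induction v using Submodule.Quotient.induction_on with
    | H v =>
    obtain ⟨w, rfl⟩ := h0 v
    exact ⟨Submodule.Quotient.mk w, by simp [g0]⟩
  by_contra hUt
  have : Nontrivial ((Fin (k+1) → K) ⧸ U) := Submodule.Quotient.nontrivial_iff.2 hUt
  let e := LinearEquiv.ofBijective g0 ⟨hg0i, hg0s⟩
  obtain ⟨μ, hμ⟩ := Module.End.exists_eigenvalue (e.symm.toLinearMap ∘ₗ g1)
  obtain ⟨v, hv⟩ := hμ.exists_hasEigenvector
  have hsurj : Function.Surjective ((e.symm.toLinearMap ∘ₗ g1) - μ • (LinearMap.id : _ →ₗ[K] ((Fin (k+1) → K) ⧸ U))) := by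
    intro v
    obtain ⟨v, rfl⟩ := e.symm.surjective v
    induction v using Submodule.Quotient.induction_on with
    | H v =>
    obtain ⟨w, rfl⟩ := h1 μ v
    refine ⟨Submodule.Quotient.mk w, ?_⟩
    apply e.injective
    have he : e (Submodule.Quotient.mk w) = Submodule.Quotient.mk (f0 w) := by
      rfl
    simp [he, g1]
  have hinj := LinearMap.injective_iff_surjective.2 hsurj
  apply hv.2
  apply hinj
  have := hv.apply_eq_smul
  rw [map_zero, LinearMap.sub_apply, this]
  simp

lemma isUnit_chain {K : Type*} [Field K] [IsAlgClosed K] {k : ℕ}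
    (S0 S1 : Matrix (Fin (k+1)) (Fin k) K)
    (h : ∀ c₀ c₁ : K, ¬ (c₀ = 0 ∧ c₁ = 0) → (c₀ • S0 + c₁ • S1).rank = k)
    (Y : Matrix (Fin (k+1)) (Fin (k+1)) K) (hY : IsCh S0 S1 Y) (hne : Y ≠ 0) : IsUnit Y := by
  rw [← Matrix.linearIndependent_rows_iff_isUnit]
  apply linearIndependent_of_top_le_span_of_card_eq_finrank
  · refine (chain_aux (Matrix.vecMulLinear S0) (Matrix.vecMulLinear S1) ?_ ?_ Y.row ?_ ?_ ?_ ?_).ge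
    · apply surj_of_rank
      simpa using h 1 0 (by simp)
    · intro μ
      have := surj_of_rank _ (h (-μ) 1 (by simp))
      convert this using 2
      ext v
      simp [Matrix.vecMul_add, Matrix.vecMul_smul, sub_eq_add_neg, add_comm]
    · exact funext hY.1
    · exact funext hY.2.1
    · exact fun i => funext (hY.2.2 i)
    · exact hne
  · simp

lemma isUnit_chainF {F : Type*} [Field F] {k : ℕ}
    (x : Matrix (Fin (k+1)) (Fin k) F × Matrix (Fin (k+1)) (Fin k) F) (hx : x ∈ Mk F k)
    (Y : Matrix (Fin (k+1)) (Fin (k+1)) F) (hY : IsCh x.1 x.2 Y) (hne : Y ≠ 0) : IsUnit Y := by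
  let φ := algebraMap F (AlgebraicClosure F)
  have hφ : Function.Injective φ := φ.injective
  have : IsUnit (Y.map φ) := by
    apply isUnit_chain (x.1.map φ) (x.2.map φ) hx
    · unfold IsCh
      simp only [← Matrix.map_mul, Matrix.map_apply, ← map_add]
      exact ⟨fun j => by rw [hY.1, map_zero], fun j => by rw [hY.2.1, map_zero],
        fun i j => by rw [hY.2.2, map_zero]⟩
    · intro h0
      apply hne
      ext i j
      apply hφ
      simpa using congrFun (congrFun h0 i) j
  rw [Matrix.isUnit_iff_isUnit_det, isUnit_iff_ne_zero] at this ⊢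
  intro h0
  apply this
  have h2 := RingHom.map_det φ Y
  rw [h0, map_zero] at h2
  exact h2.symm

lemma exists_chain {F : Type*} [Field F] {k : ℕ}
    (S0 S1 : Matrix (Fin (k+1)) (Fin k) F) : ∃ Y, IsCh S0 S1 Y ∧ Y ≠ 0 := by
  let L : Matrix (Fin (k+1)) (Fin (k+1)) F →ₗ[F]
      (Fin k → F) × (Fin k → F) × (Fin k → Fin k → F) :=
    { toFun := fun Y => ((Y * S0) 0, (Y * S1) (Fin.last k),
        fun i j => (Y * S1) i.castSucc j + (Y * S0) i.succ j)
      map_add' := by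
        intro a b
        simp only [Matrix.add_mul]
        refine Prod.ext rfl (Prod.ext rfl ?_)
        funext i j
        simp only [Matrix.add_apply, Prod.snd_add, Pi.add_apply]
        ring
      map_smul' := by
        intro c a
        simp only [Matrix.smul_mul]
        refine Prod.ext rfl (Prod.ext rfl ?_)
        funext i j
        simp [mul_add] }
  have hlt : LinearMap.ker L ≠ ⊥ := by
    apply LinearMap.ker_ne_bot_of_finrank_lt
    simp [Module.finrank_matrix, Module.finrank_pi_fintype]
    ring_nf
    omega
  obtain ⟨Y, hY, hne⟩ := Submodule.exists_mem_ne_zero_of_ne_bot hlt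
  have hY' : L Y = 0 := hY
  refine ⟨Y, ⟨fun j => ?_, fun j => ?_, fun i j => ?_⟩, hne⟩
  · exact congrFun (congrArg Prod.fst hY') j
  · exact congrFun (congrArg (fun p => p.2.1) hY') j
  · exact congrFun (congrFun (congrArg (fun p => p.2.2) hY') i) j

lemma mulVec_inj_of_rank {F : Type*} [Field F] {k : ℕ} (S : Matrix (Fin (k+1)) (Fin k) F)
    (h : S.rank = k) : Function.Injective S.mulVec := by
  have h2 := LinearMap.finrank_range_add_finrank_ker S.mulVecLin
  rw [Matrix.rank] at h
  rw [h] at h2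
  have : Module.finrank F (LinearMap.ker S.mulVecLin) = 0 := by
    simp at h2; simpa using h2
  rw [Submodule.finrank_eq_zero, LinearMap.ker_eq_bot] at this
  exact this

lemma inj_fst {F : Type*} [Field F] {k : ℕ}
    (x : Matrix (Fin (k+1)) (Fin k) F × Matrix (Fin (k+1)) (Fin k) F) (hx : x ∈ Mk F k) :
    x.1.rank = k := by
  have h := hx 1 0 (by simp)
  rw [one_smul, zero_smul, add_zero] at h
  have hi := mulVec_inj_of_rank _ h
  have hinj : Function.Injective x.1.mulVecLin := by
    rw [injective_iff_map_eq_zero]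
    intro v hv
    have hv' : x.1.mulVec v = 0 := hv
    have h2 : (fun i => algebraMap F (AlgebraicClosure F) (v i)) = 0 := by
      apply hi
      funext i
      have := RingHom.map_mulVec (algebraMap F (AlgebraicClosure F)) x.1 v i
      rw [hv'] at this
      rw [Matrix.mulVec_zero]
      simpa [Function.comp_def] using this.symm
    funext i
    have := congrFun h2 i
    simpa using this
  rw [Matrix.rank, LinearMap.finrank_range_of_inj hinj]
  simp

lemma mul_left_cancel_of_rank {F : Type*} [Field F] {k : ℕ} (S : Matrix (Fin (k+1)) (Fin k) F)
    (h : S.rank = k) {A A' : Matrix (Fin k) (Fin k) F} (hA : S * A = S * A') : A = A' := by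
  apply Matrix.ext_of_mulVec_single
  intro i
  apply mulVec_inj_of_rank S h
  simp only [Matrix.mulVec_mulVec, hA]

/-- The block extracted from the chain is invertible. -/
lemma isUnit_block {F : Type*} [Field F] {k : ℕ}
    (x : Matrix (Fin (k+1)) (Fin k) F × Matrix (Fin (k+1)) (Fin k) F) (hx : x ∈ Mk F k)
    (Y : Matrix (Fin (k+1)) (Fin (k+1)) F) (hY : IsCh x.1 x.2 Y) (hu : IsUnit Y) :
    IsUnit (Matrix.of fun (i : Fin k) j => (Y * x.1) i.succ j) := by
  rw [← Matrix.mulVec_injective_iff_isUnit]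
  rw [← Matrix.coe_mulVecLin, injective_iff_map_eq_zero]
  intro v hv
  apply mulVec_inj_of_rank x.1 (inj_fst x hx)
  apply Matrix.mulVec_injective_of_isUnit hu
  rw [Matrix.mulVec_mulVec, Matrix.mulVec_zero, Matrix.mulVec_zero]
  funext i
  induction i using Fin.cases with
  | zero => simp [Matrix.mulVec, dotProduct, hY.1]
  | succ i => exact congrFun hv i

lemma act_trans {F : Type*} [Field F] (k : ℕ)
    (x m : Matrix (Fin (k+1)) (Fin k) F × Matrix (Fin (k+1)) (Fin k) F)
    (hx : x ∈ Mk F k) (hm : m ∈ Mk F k) :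
    ∃ g : GL (Fin k) F × GL (Fin (k+1)) F, hmAct g x = m := by
  obtain ⟨Y, hY, hYn⟩ := exists_chain x.1 x.2
  obtain ⟨Z, hZ, hZn⟩ := exists_chain m.1 m.2
  have hYu := isUnit_chainF x hx Y hY hYn
  have hZu := isUnit_chainF m hm Z hZ hZn
  obtain ⟨C, hC⟩ := isUnit_block x hx Y hY hYu
  obtain ⟨D, hD⟩ := isUnit_block m hm Z hZ hZu
  obtain ⟨Y, rfl⟩ := hYu
  obtain ⟨Z, rfl⟩ := hZu
  let P : GL (Fin k) F := C⁻¹ * D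
  have hCP : (C : Matrix (Fin k) (Fin k) F) * (P : Matrix (Fin k) (Fin k) F) = D := by
    rw [← Units.val_mul]; simp [P]
  have hPt : IsUnit ((P : Matrix (Fin k) (Fin k) F)ᵀ) := by
    rw [Matrix.isUnit_transpose]; exact P.isUnit
  obtain ⟨A, hA⟩ := hPt
  have h0 : (Y : Matrix (Fin (k+1)) (Fin (k+1)) F) * x.1 * (P : Matrix (Fin k) (Fin k) F) = (Z : Matrix (Fin (k+1)) (Fin (k+1)) F) * m.1 := by
    ext i j
    induction i using Fin.cases with
    | zero => rw [hZ.1, Matrix.mul_apply]; simp only [hY.1, zero_mul, Finset.sum_const_zero]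
    | succ i =>
      have := congrFun (congrFun hCP i) j
      rw [hC, hD] at this
      exact this
  have h1 : (Y : Matrix (Fin (k+1)) (Fin (k+1)) F) * x.2 * (P : Matrix (Fin k) (Fin k) F) = (Z : Matrix (Fin (k+1)) (Fin (k+1)) F) * m.2 := by
    ext i j
    induction i using Fin.lastCases with
    | last => rw [hZ.2.1, Matrix.mul_apply]; simp only [hY.2.1, zero_mul, Finset.sum_const_zero]
    | cast i =>
      have := congrFun (congrFun h0 i.succ) j
      rw [eq_neg_of_add_eq_zero_left (hZ.2.2 i j), ← this, Matrix.mul_apply, Matrix.mul_apply,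
        ← Finset.sum_neg_distrib]
      refine Finset.sum_congr rfl fun l _ => ?_
      rw [eq_neg_of_add_eq_zero_left (hY.2.2 i l), neg_mul]
  have hZZ : ((Z⁻¹ : GL (Fin (k+1)) F) : Matrix (Fin (k+1)) (Fin (k+1)) F) * (Z : Matrix (Fin (k+1)) (Fin (k+1)) F) = 1 := Units.inv_mul Z
  refine ⟨(A, Z⁻¹ * Y), ?_⟩
  unfold hmAct
  simp only [hA, Matrix.transpose_transpose, Units.val_mul]
  refine Prod.ext ?_ ?_
  · simp only [Matrix.mul_assoc] at h0 ⊢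
    rw [h0, ← Matrix.mul_assoc, hZZ, Matrix.one_mul]
  · simp only [Matrix.mul_assoc] at h1 ⊢
    rw [h1, ← Matrix.mul_assoc, hZZ, Matrix.one_mul]

lemma act_mul {F : Type*} [Field F] {k : ℕ} (g h : GL (Fin k) F × GL (Fin (k+1)) F)
    (x : Matrix (Fin (k+1)) (Fin k) F × Matrix (Fin (k+1)) (Fin k) F) :
    hmAct (g * h) x = hmAct g (hmAct h x) := by
  simp [hmAct, Matrix.mul_assoc]

lemma act_one {F : Type*} [Field F] {k : ℕ}
    (x : Matrix (Fin (k+1)) (Fin k) F × Matrix (Fin (k+1)) (Fin k) F) :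
    hmAct 1 x = x := by
  simp [hmAct]

lemma ch_transport {F : Type*} [Field F] {k : ℕ} {S0 S1 : Matrix (Fin (k+1)) (Fin k) F}
    {Y B : Matrix (Fin (k+1)) (Fin (k+1)) F} {P : Matrix (Fin k) (Fin k) F} (hY : IsCh S0 S1 Y)
    (h0 : B * S0 = S0 * P) (h1 : B * S1 = S1 * P) : IsCh S0 S1 (Y * B) := by
  unfold IsCh
  simp only [Matrix.mul_assoc, h0, h1]
  simp only [← Matrix.mul_assoc]
  refine ⟨fun j => ?_, fun j => ?_, fun i j => ?_⟩
  · rw [Matrix.mul_apply]; simp only [hY.1, zero_mul, Finset.sum_const_zero]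
  · rw [Matrix.mul_apply]; simp only [hY.2.1, zero_mul, Finset.sum_const_zero]
  · rw [Matrix.mul_apply, Matrix.mul_apply, ← Finset.sum_add_distrib]
    simp only [← add_mul, hY.2.2, zero_mul, Finset.sum_const_zero]

lemma ch_sub {F : Type*} [Field F] {k : ℕ} {S0 S1 : Matrix (Fin (k+1)) (Fin k) F}
    {Y Z : Matrix (Fin (k+1)) (Fin (k+1)) F} (c : F) (hY : IsCh S0 S1 Y)
    (hZ : IsCh S0 S1 Z) : IsCh S0 S1 (Z - c • Y) := by
  unfold IsCh
  simp only [Matrix.sub_mul, Matrix.smul_mul, Matrix.sub_apply, Matrix.smul_apply, smul_eq_mul]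
  refine ⟨fun j => ?_, fun j => ?_, fun i j => ?_⟩
  · rw [hY.1, hZ.1]; ring
  · rw [hY.2.1, hZ.2.1]; ring
  · linear_combination hZ.2.2 i j - c * hY.2.2 i j

lemma stab {F : Type*} [Field F] (k : ℕ)
    (x : Matrix (Fin (k+1)) (Fin k) F × Matrix (Fin (k+1)) (Fin k) F)
    (hx : x ∈ Mk F k) (g : GL (Fin k) F × GL (Fin (k+1)) F) :
    hmAct g x = x ↔ g ∈ Nset F k := by
  constructor
  · intro h
    obtain ⟨Y, hY, hYn⟩ := exists_chain x.1 x.2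
    have hYu := isUnit_chainF x hx Y hY hYn
    obtain ⟨A, B⟩ := g
    have e0 : (B : Matrix (Fin (k+1)) (Fin (k+1)) F) * x.1 * (A : Matrix (Fin k) (Fin k) F)ᵀ = x.1 := congrArg Prod.fst h
    have e1 : (B : Matrix (Fin (k+1)) (Fin (k+1)) F) * x.2 * (A : Matrix (Fin k) (Fin k) F)ᵀ = x.2 := congrArg Prod.snd h
    have hAA : (A : Matrix (Fin k) (Fin k) F)ᵀ * ((A⁻¹ : GL (Fin k) F) : Matrix (Fin k) (Fin k) F)ᵀ = 1 := by
      rw [← Matrix.transpose_mul, Units.inv_mul, Matrix.transpose_one]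
    have hch : IsCh x.1 x.2 (Y * (B : Matrix (Fin (k+1)) (Fin (k+1)) F)) := by
      refine ch_transport (P := ((A⁻¹ : GL (Fin k) F) : Matrix (Fin k) (Fin k) F)ᵀ) hY ?_ ?_
      · conv_rhs => rw [← e0, Matrix.mul_assoc, hAA, Matrix.mul_one]
      · conv_rhs => rw [← e1, Matrix.mul_assoc, hAA, Matrix.mul_one]
    have hsurj := surj_of_rank x.1 (inj_fst x hx)
    have hker1 : Module.finrank F (LinearMap.ker x.1.vecMulLinear) = 1 := by
      have := LinearMap.finrank_range_add_finrank_ker x.1.vecMulLinear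
      rw [LinearMap.range_eq_top.2 hsurj, finrank_top] at this
      simp at this
      omega
    have hY0 : Y.row 0 ∈ LinearMap.ker x.1.vecMulLinear := funext hY.1
    have hZ0 : (Y * (B : Matrix (Fin (k+1)) (Fin (k+1)) F)).row 0 ∈ LinearMap.ker x.1.vecMulLinear := funext hch.1
    have hY0n : Y.row 0 ≠ 0 := (Matrix.linearIndependent_rows_iff_isUnit.2 hYu).ne_zero 0
    have hY0n' : (⟨Y.row 0, hY0⟩ : LinearMap.ker x.1.vecMulLinear) ≠ 0 := by
      simpa [Subtype.ext_iff] using hY0n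
    obtain ⟨c, hc⟩ := (finrank_eq_one_iff_of_nonzero' _ hY0n').1 hker1 ⟨_, hZ0⟩
    have hc' : c • Y.row 0 = (Y * (B : Matrix (Fin (k+1)) (Fin (k+1)) F)).row 0 := congrArg Subtype.val hc
    have hsub := ch_sub c hY hch
    have hzero : Y * (B : Matrix (Fin (k+1)) (Fin (k+1)) F) - c • Y = 0 := by
      by_contra hn
      have hu := isUnit_chainF x hx _ hsub hn
      apply (Matrix.linearIndependent_rows_iff_isUnit.2 hu).ne_zero 0
      funext j
      have := congrFun hc' j
      simp only [Matrix.row, Pi.smul_apply] at this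
      simp only [Matrix.row, Matrix.sub_apply, Matrix.smul_apply, Pi.zero_apply]
      rw [← this, sub_self]
    have hB : (B : Matrix (Fin (k+1)) (Fin (k+1)) F) = c • (1 : Matrix (Fin (k+1)) (Fin (k+1)) F) := by
      apply hYu.mul_left_cancel
      rw [sub_eq_zero.1 hzero]
      simp
    have hcn : c ≠ 0 := by
      rintro rfl
      rw [zero_smul] at hB
      exact B.ne_zero hB
    refine ⟨(Units.mk0 c hcn)⁻¹, ?_, ?_⟩
    · rw [hB] at e0
      have : (A : Matrix (Fin k) (Fin k) F)ᵀ = c⁻¹ • (1 : Matrix (Fin k) (Fin k) F) := by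
        apply mul_left_cancel_of_rank x.1 (inj_fst x hx)
        simp only [Matrix.smul_mul, Matrix.one_mul] at e0
        rw [Matrix.mul_smul, Matrix.mul_one]
        conv_rhs => rw [← e0]
        rw [smul_smul, inv_mul_cancel₀ hcn, one_smul]
      have h2 := congrArg Matrix.transpose this
      simpa using h2
    · simpa using hB
  · rintro ⟨c, h1, h2⟩
    unfold hmAct
    rw [h1, h2]
    simp [smul_smul]

/-- The quotient `G(F) = (GL_k × GL_{k+1})/N` acts freely and transitively on
`M_k(F)`: the action is transitive, and for any base point `x ∈ M_k(F)` two group elements move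
`x` to the same point iff they lie in the same coset of `N`.  In particular `g ↦ g·x` induces a
bijection `G(F) → M_k(F)`. -/
theorem stmt4 {F : Type*} [Field F] (k : ℕ) (x : Matrix (Fin (k+1)) (Fin k) F × Matrix (Fin (k+1)) (Fin k) F)
    (hx : x ∈ Mk F k) :
    (∀ m ∈ Mk F k, ∃ g : GL (Fin k) F × GL (Fin (k+1)) F, hmAct g x = m) ∧
    (∀ g g' : GL (Fin k) F × GL (Fin (k+1)) F,
      hmAct g x = hmAct g' x ↔ g⁻¹ * g' ∈ Nset F k) := by
  refine ⟨fun m hm => act_trans k x m hx hm, fun g g' => ?_⟩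
  rw [← stab k x hx, act_mul]
  constructor
  · intro h
    rw [← h, ← act_mul, inv_mul_cancel, act_one]
  · intro h
    conv_lhs => rw [← h]
    rw [← act_mul, mul_inv_cancel, act_one]
end

section
/- For 2 × 2 × 3 hypermatrices: the number of nondegenerate 2 × 2 × 3 hypermatrices over F_q is q⁴(q-1)⁴(1+q)²(1+q+q²). -/
open Matrix

/-- Scalar form of nondegeneracy. -/
def NDg {L : Type*} [Field L] (A B : Matrix (Fin 3) (Fin 2) L) : Prop :=
  ∀ c d u v : L, (∀ k, c * (A k 0 * u + A k 1 * v) + d * (B k 0 * u + B k 1 * v) = 0) →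
    (c = 0 ∧ d = 0) ∨ (u = 0 ∧ v = 0)

theorem rank_two_iff {L : Type*} [Field L] (M : Matrix (Fin 3) (Fin 2) L) :
    M.rank = 2 ↔ ∀ u v : L, (∀ k, M k 0 * u + M k 1 * v = 0) → u = 0 ∧ v = 0 := by
  have h1 : M.rank = 2 ↔ LinearMap.ker M.mulVecLin = ⊥ := by
    have h := LinearMap.finrank_range_add_finrank_ker M.mulVecLin
    rw [← Submodule.finrank_eq_zero (R := L)]
    simp only [Module.finrank_fintype_fun_eq_card, Fintype.card_fin] at h
    unfold Matrix.rank
    omega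
  rw [h1, LinearMap.ker_eq_bot']
  constructor
  · intro h u v huv
    have := h ![u, v] (by
      ext k
      simpa [Matrix.mulVec, dotProduct, Fin.sum_univ_two] using huv k)
    exact ⟨by simpa using congrFun this 0, by simpa using congrFun this 1⟩
  · intro h w hw
    have := h (w 0) (w 1) (by
      intro k
      simpa [Matrix.mulVec, dotProduct, Fin.sum_univ_two] using congrFun hw k)
    ext i
    fin_cases i
    · exact this.1
    · exact this.2

theorem ndg_iff {L : Type*} [Field L] (A B : Matrix (Fin 3) (Fin 2) L) :
    (∀ c d : L, ¬ (c = 0 ∧ d = 0) → (c • A + d • B).rank = 2) ↔ NDg A B := by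
  simp only [rank_two_iff, NDg]
  constructor
  · intro h c d u v hk
    by_cases hc : c = 0 ∧ d = 0
    · exact Or.inl hc
    · refine Or.inr (h c d hc u v fun k => ?_)
      rw [← hk k]
      simp
      ring
  · intro h c d hc u v hk
    refine (h c d u v fun k => ?_).resolve_left hc
    rw [← hk k]
    simp
    ring

theorem ndg_sing {L : Type*} [Field L] {A B : Matrix (Fin 3) (Fin 2) L} (h : NDg A B)
    {x y z t : L} (hdet : x * t = y * z)
    (hk : ∀ k, x * A k 0 + y * A k 1 + z * B k 0 + t * B k 1 = 0) :
    x = 0 ∧ y = 0 ∧ z = 0 ∧ t = 0 := by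
  refine ⟨?_, ?_, ?_, ?_⟩
  · have := h x z x y fun k => by linear_combination x * hk k - B k 1 * hdet
    tauto
  · have := h y t x y fun k => by linear_combination y * hk k + B k 0 * hdet
    tauto
  · have := h x z z t fun k => by linear_combination z * hk k + A k 1 * hdet
    tauto
  · have := h y t z t fun k => by linear_combination t * hk k - A k 0 * hdet
    tauto

theorem ndg_mul_right {L : Type*} [Field L] {A B : Matrix (Fin 3) (Fin 2) L} (h : NDg A B)
    (m : Matrix (Fin 2) (Fin 2) L) (hm : m.det ≠ 0) : NDg (A * m) (B * m) := by
  rw [← ndg_iff] at h ⊢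
  intro c d hc
  refine Eq.trans ?_ ((rank_mul_eq_left_of_det_ne_zero m (c • A + d • B) hm).trans (h c d hc))
  simp [Matrix.add_mul]

theorem ndg_mul_left {L : Type*} [Field L] {A B : Matrix (Fin 3) (Fin 2) L} (h : NDg A B)
    (m : Matrix (Fin 3) (Fin 3) L) (hm : m.det ≠ 0) : NDg (m * A) (m * B) := by
  rw [← ndg_iff] at h ⊢
  intro c d hc
  refine Eq.trans ?_ ((rank_mul_eq_right_of_det_ne_zero m (c • A + d • B) hm).trans (h c d hc))
  simp [Matrix.mul_add]

/-- Base slices. -/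
def A0 (L : Type*) [Field L] : Matrix (Fin 3) (Fin 2) L := !![1, 0; 0, 1; 0, 0]
/-- Base slices. -/
def B0 (L : Type*) [Field L] : Matrix (Fin 3) (Fin 2) L := !![0, -1; 0, 0; 1, 0]

theorem ndg_base (L : Type*) [Field L] : NDg (A0 L) (B0 L) := by
  intro c d u v hk
  have h0 := hk 0
  have h1 := hk 1
  have h2 := hk 2
  simp [A0, B0] at h0 h1 h2
  grind

theorem exists_ker {F : Type*} [Field F] (A B : Matrix (Fin 3) (Fin 2) F) :
    ∃ x y z t : F, ¬ (x = 0 ∧ y = 0 ∧ z = 0 ∧ t = 0) ∧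
      ∀ k, x * A k 0 + y * A k 1 + z * B k 0 + t * B k 1 = 0 := by
  let M : Matrix (Fin 3) (Fin 4) F := Matrix.of fun k => ![A k 0, A k 1, B k 0, B k 1]
  have hM : LinearMap.ker M.mulVecLin ≠ ⊥ := M.mulVecLin.ker_ne_bot_of_finrank_lt (by simp)
  obtain ⟨w, hw, hw0⟩ := (Submodule.ne_bot_iff _).1 hM
  refine ⟨w 0, w 1, w 2, w 3, ?_, ?_⟩
  · rintro ⟨h0, h1, h2, h3⟩
    apply hw0
    ext i
    fin_cases i <;> assumption
  · intro k
    have := congrFun (LinearMap.mem_ker.1 hw) k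
    simp [Matrix.mulVec, dotProduct, Fin.sum_univ_four, M] at this
    linear_combination this

/-- Nondegeneracy over the algebraic closure. -/
def NDc {F : Type*} [Field F] (S : Matrix (Fin 3) (Fin 2) F × Matrix (Fin 3) (Fin 2) F) : Prop :=
  NDg (S.1.map (algebraMap F (AlgebraicClosure F))) (S.2.map (algebraMap F (AlgebraicClosure F)))

/-- The orbit map. -/
def fmap {F : Type*} [Field F] (p : GL (Fin 2) F × GL (Fin 3) F) :
    Matrix (Fin 3) (Fin 2) F × Matrix (Fin 3) (Fin 2) F :=
  (p.2.1 * A0 F * p.1.1, p.2.1 * B0 F * p.1.1)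

theorem map_det_ne {F : Type*} [Field F] {n : ℕ} (g : Matrix (Fin n) (Fin n) F) (hg : g.det ≠ 0) :
    (g.map (algebraMap F (AlgebraicClosure F))).det ≠ 0 := by
  rw [← RingHom.mapMatrix_apply, ← RingHom.map_det]
  simpa using hg

theorem gl_det_ne {F : Type*} [Field F] {n : ℕ} (g : GL (Fin n) F) : g.1.det ≠ 0 :=
  ((Matrix.isUnit_iff_isUnit_det _).1 g.isUnit).ne_zero

theorem fmap_nd {F : Type*} [Field F] (p : GL (Fin 2) F × GL (Fin 3) F) : NDc (fmap p) := by
  unfold NDc fmap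
  simp only [Matrix.map_mul]
  apply ndg_mul_right _ _ (map_det_ne _ (gl_det_ne _))
  apply ndg_mul_left _ _ (map_det_ne _ (gl_det_ne _))
  convert ndg_base (AlgebraicClosure F) using 1
  · ext i j
    fin_cases i <;> fin_cases j <;> simp [A0]
  · ext i j
    fin_cases i <;> fin_cases j <;> simp [B0]

theorem fmap_surj {F : Type*} [Field F]
    (S : Matrix (Fin 3) (Fin 2) F × Matrix (Fin 3) (Fin 2) F) (h : NDc S) :
    ∃ p, fmap p = S := by
  obtain ⟨A, B⟩ := S
  obtain ⟨x, y, z, t, hne, hk⟩ := exists_ker A B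
  have hφ := (algebraMap F (AlgebraicClosure F)).injective
  have hdet : x * t - y * z ≠ 0 := by
    intro h0
    have := ndg_sing h (x := algebraMap F _ x) (y := algebraMap F _ y) (z := algebraMap F _ z)
      (t := algebraMap F _ t) (by rw [← map_mul, ← map_mul, sub_eq_zero.1 h0])
      (fun k => by
        simp only [Matrix.map_apply, ← map_mul, ← map_add, hk k, map_zero])
    simp only [map_eq_zero] at this
    exact hne this
  let m : Matrix (Fin 2) (Fin 2) F := !![x, z; y, t]
  have hm : m.det ≠ 0 := by
    simp only [m, Matrix.det_fin_two_of]
    intro h0; apply hdet; linear_combination h0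
  have h' : NDc (A * m, B * m) := by
    unfold NDc
    simp only [Matrix.map_mul]
    exact ndg_mul_right h _ (map_det_ne _ hm)
  have hk' : ∀ k, (A * m) k 0 + (B * m) k 1 = 0 := by
    intro k
    simp [Matrix.mul_apply, Fin.sum_univ_two, m]
    linear_combination hk k
  generalize hA' : A * m = A' at *
  generalize hB' : B * m = B' at *
  let H : Matrix (Fin 3) (Fin 3) F := Matrix.of fun k => ![A' k 0, A' k 1, B' k 0]
  have hH : H.det ≠ 0 := by
    intro h0
    obtain ⟨w, hw0, hw⟩ := Matrix.exists_mulVec_eq_zero_iff.2 h0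
    have hw' : ∀ k, A' k 0 * w 0 + A' k 1 * w 1 + B' k 0 * w 2 = 0 := by
      intro k
      have := congrFun hw k
      simpa [Matrix.mulVec, dotProduct, Fin.sum_univ_three, H] using this
    let φ := algebraMap F (AlgebraicClosure F)
    obtain ⟨s, hs⟩ : ∃ s : AlgebraicClosure F, (φ (w 0) - s) * (0 - s) = φ (w 1) * φ (w 2) := by
      let p : Polynomial (AlgebraicClosure F) :=
        Polynomial.C 1 * Polynomial.X ^ 2 + Polynomial.C (-φ (w 0)) * Polynomial.X
          + Polynomial.C (-(φ (w 1) * φ (w 2)))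
      have hp : p.degree = 2 := Polynomial.degree_quadratic one_ne_zero
      obtain ⟨s, hs⟩ := IsAlgClosed.exists_root p (by rw [hp]; decide)
      refine ⟨s, ?_⟩
      simp [p] at hs
      linear_combination hs
    have := ndg_sing h' hs (fun k => by
      have e1 := congrArg φ (hw' k)
      have e2 := congrArg φ (hk' k)
      simp only [map_add, map_mul, map_zero] at e1 e2
      simp only [Matrix.map_apply]
      change (φ (w 0) - s) * φ _ + φ (w 1) * φ _ + φ (w 2) * φ _ + (0 - s) * φ _ = 0
      linear_combination e1 - s * e2)
    obtain ⟨a1, a2, a3, a4⟩ := this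
    have a0 : φ (w 0) = 0 := by linear_combination a1 - a4
    apply hw0
    ext i
    fin_cases i
    · exact (map_eq_zero φ).1 a0
    · exact (map_eq_zero φ).1 a2
    · exact (map_eq_zero φ).1 a3
  refine ⟨((Matrix.GeneralLinearGroup.mkOfDetNeZero m hm)⁻¹,
    Matrix.GeneralLinearGroup.mkOfDetNeZero H hH), ?_⟩
  have e1 : H * A0 F = A' := by
    ext i j
    fin_cases j <;> simp [Matrix.mul_apply, Fin.sum_univ_three, H, A0]
  have e2 : H * B0 F = B' := by
    ext i j
    fin_cases j
    · simp [Matrix.mul_apply, Fin.sum_univ_three, H, B0]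
    · simp [Matrix.mul_apply, Fin.sum_univ_three, H, B0]
      linear_combination - hk' i
  have e3 : m * (Matrix.GeneralLinearGroup.mkOfDetNeZero m hm)⁻¹.1 = 1 :=
    (Matrix.GeneralLinearGroup.mkOfDetNeZero m hm).mul_inv
  unfold fmap
  change (H * A0 F * _, H * B0 F * _) = _
  simp only [e1, e2]
  rw [← hA', ← hB', Matrix.mul_assoc, Matrix.mul_assoc, e3, Matrix.mul_one, Matrix.mul_one]

theorem stab_s13 {F : Type*} [Field F] (g : Matrix (Fin 2) (Fin 2) F) (h : Matrix (Fin 3) (Fin 3) F)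
    (hA : h * A0 F = A0 F * g) (hB : h * B0 F = B0 F * g) :
    g = Matrix.scalar _ (g 0 0) ∧ h = Matrix.scalar _ (g 0 0) := by
  have eA := fun i j => congrFun (congrFun hA i) j
  have eB := fun i j => congrFun (congrFun hB i) j
  simp only [Matrix.mul_apply, Fin.sum_univ_three, Fin.sum_univ_two, A0, B0, Fin.forall_fin_succ] at eA eB
  simp at eA eB
  constructor
  · ext i j
    fin_cases i <;> fin_cases j <;> simp <;> grind
  · ext i j
    fin_cases i <;> fin_cases j <;> simp <;> grind

/-- Scalars acting. -/
def sact {F : Type*} [Field F] (t : Fˣ) (p : GL (Fin 2) F × GL (Fin 3) F) :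
    GL (Fin 2) F × GL (Fin 3) F :=
  (Matrix.GeneralLinearGroup.scalar (Fin 2) t * p.1,
   Matrix.GeneralLinearGroup.scalar (Fin 3) t⁻¹ * p.2)

theorem fmap_sact {F : Type*} [Field F] (t : Fˣ) (p : GL (Fin 2) F × GL (Fin 3) F) :
    fmap (sact t p) = fmap p := by
  unfold fmap sact
  simp only [Units.val_mul, Matrix.GeneralLinearGroup.coe_scalar, Matrix.scalar_apply,
    ← Matrix.smul_one_eq_diagonal]
  simp [smul_smul]

theorem fmap_eq {F : Type*} [Field F] (p r : GL (Fin 2) F × GL (Fin 3) F)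
    (hpr : fmap p = fmap r) : ∃ t, sact t p = r := by
  obtain ⟨g, h⟩ := p
  obtain ⟨g', h'⟩ := r
  simp only [fmap, Prod.mk.injEq] at hpr
  obtain ⟨h1, h2⟩ := hpr
  have key : ∀ X : Matrix (Fin 3) (Fin 2) F, h.1 * X * g.1 = h'.1 * X * g'.1 →
      (h'⁻¹ * h).1 * X = X * (g' * g⁻¹).1 := by
    intro X hX
    have i1 : h'⁻¹.1 * h'.1 = 1 := h'.inv_mul
    have i2 : g.1 * g⁻¹.1 = 1 := g.mul_inv
    calc (h'⁻¹ * h).1 * X = h'⁻¹.1 * (h.1 * X * g.1) * g⁻¹.1 := by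
          rw [Units.val_mul]
          simp only [Matrix.mul_assoc]
          rw [i2, Matrix.mul_one]
      _ = (h'⁻¹.1 * h'.1) * X * (g'.1 * g⁻¹.1) := by
          rw [hX]
          simp only [Matrix.mul_assoc]
      _ = _ := by rw [i1, Matrix.one_mul, Units.val_mul]
  obtain ⟨k1, k2⟩ := stab_s13 _ _ (key _ h1) (key _ h2)
  have ht : (g' * g⁻¹).1 0 0 ≠ 0 := by
    intro h0
    have := gl_det_ne (g' * g⁻¹)
    rw [k1, h0] at this
    simp at this
  refine ⟨Units.mk0 _ ht, ?_⟩
  have q1 : g' * g⁻¹ = Matrix.GeneralLinearGroup.scalar (Fin 2) (Units.mk0 _ ht) := Units.ext k1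
  have q2 : h'⁻¹ * h = Matrix.GeneralLinearGroup.scalar (Fin 3) (Units.mk0 _ ht) := Units.ext k2
  unfold sact
  rw [map_inv, ← q1, ← q2.symm.symm]
  simp only [Prod.mk.injEq]
  constructor
  · group
  · have c := Matrix.GeneralLinearGroup.scalar_commute (Units.mk0 _ ht) h'
    rw [← q2] at c
    rw [inv_mul_eq_iff_eq_mul, c]
    group

theorem sact_inj {F : Type*} [Field F] (t s : Fˣ) (p : GL (Fin 2) F × GL (Fin 3) F)
    (h : sact t p = sact s p) : t = s := by
  have h1 := congrArg Prod.fst h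
  simp only [sact, mul_left_inj] at h1
  have h3 : (Matrix.GeneralLinearGroup.scalar (Fin 2) t).1 =
      (Matrix.GeneralLinearGroup.scalar (Fin 2) s).1 := by rw [h1]
  have h2 : (Matrix.scalar (Fin 2) t.1) 0 0 = (Matrix.scalar (Fin 2) s.1) 0 0 :=
    congrFun (congrFun h3 0) 0
  simp at h2
  exact Units.ext h2

theorem card_mul {F : Type*} [Field F] [Fintype F] :
    Nat.card {S : Matrix (Fin 3) (Fin 2) F × Matrix (Fin 3) (Fin 2) F // NDc S} * Nat.card Fˣ =
      Nat.card (GL (Fin 2) F) * Nat.card (GL (Fin 3) F) := by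
  rw [← Nat.card_prod, ← Nat.card_prod]
  choose σ hσ using fun S : {S : Matrix (Fin 3) (Fin 2) F × Matrix (Fin 3) (Fin 2) F // NDc S} =>
    fmap_surj S.1 S.2
  apply Nat.card_congr
  refine Equiv.ofBijective (fun x => sact x.2 (σ x.1)) ⟨?_, ?_⟩
  · rintro ⟨S, t⟩ ⟨S', t'⟩ hx
    have e := congrArg fmap hx
    simp only [fmap_sact, hσ] at e
    have e' : S = S' := Subtype.ext e
    subst e'
    have : t = t' := sact_inj _ _ _ hx
    rw [this]
  · intro r
    obtain ⟨t, ht⟩ := fmap_eq (σ ⟨fmap r, fmap_nd r⟩) r (hσ _)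
    exact ⟨(⟨fmap r, fmap_nd r⟩, t), ht⟩





/-- The number of nondegenerate `2 × 2 × 3` hypermatrices over `F_q` — pairs
`(S₀, S₁)` of `3 × 2` matrices such that every nonzero `F̄_q`-linear combination `c₀S₀ + c₁S₁`
has rank `2` — equals `q⁴ (q-1)⁴ (1+q)² (1+q+q²)`. -/
theorem stmt13 {F : Type*} [Field F] [Fintype F] :
    Nat.card {S : Matrix (Fin 3) (Fin 2) F × Matrix (Fin 3) (Fin 2) F //
        ∀ c₀ c₁ : AlgebraicClosure F, ¬ (c₀ = 0 ∧ c₁ = 0) →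
          (c₀ • S.1.map (algebraMap F (AlgebraicClosure F)) +
           c₁ • S.2.map (algebraMap F (AlgebraicClosure F))).rank = 2} =
      (Fintype.card F) ^ 4 * (Fintype.card F - 1) ^ 4 *
        (1 + Fintype.card F) ^ 2 * (1 + Fintype.card F + Fintype.card F ^ 2) := by
  have h0 := card_mul (F := F)
  simp only [Matrix.card_GL_field, Nat.card_units, Nat.card_eq_fintype_card (α := F)] at h0
  simp only [ndg_iff]
  change Nat.card {S : Matrix (Fin 3) (Fin 2) F × Matrix (Fin 3) (Fin 2) F // NDc S} = _
  have hq : 1 < Fintype.card F := Fintype.one_lt_card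
  generalize Nat.card {S : Matrix (Fin 3) (Fin 2) F × Matrix (Fin 3) (Fin 2) F // NDc S} = N at *
  generalize Fintype.card F = q at *
  obtain ⟨r, rfl⟩ : ∃ r, q = r + 1 := ⟨q - 1, by omega⟩
  have hr : 0 < r := by omega
  simp only [Fin.prod_univ_two, Fin.prod_univ_three, Nat.add_sub_cancel] at h0 ⊢
  have a1 : (r + 1) ^ 2 - (r + 1) ^ ((0 : Fin 2) : ℕ) = r * (r + 2) := by
    apply Nat.sub_eq_of_eq_add; simp; ring
  have a2 : (r + 1) ^ 2 - (r + 1) ^ ((1 : Fin 2) : ℕ) = r * (r + 1) := by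
    apply Nat.sub_eq_of_eq_add; simp; ring
  have b1 : (r + 1) ^ 3 - (r + 1) ^ ((0 : Fin 3) : ℕ) = r * (1 + (r + 1) + (r + 1) ^ 2) := by
    apply Nat.sub_eq_of_eq_add; simp; ring
  have b2 : (r + 1) ^ 3 - (r + 1) ^ ((1 : Fin 3) : ℕ) = r * (r + 1) * (r + 2) := by
    apply Nat.sub_eq_of_eq_add; simp; ring
  have b3 : (r + 1) ^ 3 - (r + 1) ^ ((2 : Fin 3) : ℕ) = r * (r + 1) ^ 2 := by
    apply Nat.sub_eq_of_eq_add; simp; ring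
  rw [a1, a2, b1, b2, b3] at h0
  apply Nat.eq_of_mul_eq_mul_right hr
  rw [h0]
  ring
end
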